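/- arXiv:1912.11298 — 2 statements merged into one kernel-verified Lean document; each statement's English description precedes it below -/
import Mathlib

section
/- Let F(t) = Σ_{n∈ℤ} c_n e^{2πint} be an absolutely convergent Fourier series (i.e. Σ_n |c_n| < ∞), and let h be a holomorphic function on an open neighborhood of the closure of the range of F. Then the function t ↦ h(F(t)) also admits an absolutely convergent Fourier series expansion, i.e. there exist coefficients d_n ∈ ℂ with Σ_n |d_n| < ∞ and h(F(t)) = Σ_{n∈ℤ} d_n e^{2πint} for all t ∈ ℝ. -/
open Complex Real

/-!
Write `‖·‖_A` for the `ℓ¹` norm of the Fourier coefficients. By density of trigonometric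
polynomials, pick such a polynomial `p` with `‖F - p‖_A < r`, where `r` is less than half the
distance from the range of `F` to the complement of the domain of `h`. Taylor expansion of `h`
around `p` gives `h ∘ F = ∑ k, (h⁽ᵏ⁾ / k!) ∘ p · (F - p) ^ k`. Since `p` extends to an entire
function mapping a thin horizontal strip into the `r`-neighbourhood of the range of `F`, where
Cauchy's estimates bound `h⁽ᵏ⁾ / k!` by `M r⁻ᵏ`, each `(h⁽ᵏ⁾ / k!) ∘ p` has a bounded holomorphic
extension to a strip and hence `‖·‖_A`-norm at most `C M r⁻ᵏ`. The series therefore converges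
geometrically in `‖·‖_A`.
-/

open AddCircle Filter Topology
open scoped ENNReal NNReal Nat

section WienerNorm

variable {T : ℝ} [Fact (0 < T)]

/-- The Wiener norm of `f`: the `ℓ¹` norm of its Fourier coefficients. It takes values in `ℝ≥0∞`,
so that the Wiener algebra of absolutely convergent Fourier series is `{f | wienerNorm f ≠ ∞}`. -/
noncomputable def wienerNorm (f : C(AddCircle T, ℂ)) : ℝ≥0∞ :=
  ∑' n, ‖fourierCoeff f n‖ₑ

theorem summable_norm_fourierCoeff_iff {f : C(AddCircle T, ℂ)} :
    Summable (fun n => ‖fourierCoeff f n‖) ↔ wienerNorm f ≠ ∞ :=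
  tsum_enorm_ne_top_iff_summable_norm.symm

theorem hasSum_fourier_series_of_wienerNorm_ne_top {f : C(AddCircle T, ℂ)}
    (hf : wienerNorm f ≠ ∞) : HasSum (fun n => fourierCoeff f n • fourier n) f :=
  hasSum_fourier_series_of_summable (summable_norm_fourierCoeff_iff.mpr hf).of_norm

theorem enorm_le_wienerNorm (f : C(AddCircle T, ℂ)) : ‖f‖ₑ ≤ wienerNorm f := by
  by_cases hf : wienerNorm f = ∞
  · simp [hf]
  have : ∀ n, ‖fourierCoeff f n • fourier (T := T) n‖ₑ = ‖fourierCoeff f n‖ₑ := fun n => by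
    rw [enorm_smul, ← ofReal_norm (fourier n), fourier_norm, ENNReal.ofReal_one, mul_one]
  calc ‖f‖ₑ = ‖∑' n, fourierCoeff f n • fourier n‖ₑ := by
        rw [(hasSum_fourier_series_of_wienerNorm_ne_top hf).tsum_eq]
    _ ≤ ∑' n, ‖fourierCoeff f n • fourier (T := T) n‖ₑ := enorm_tsum_le_tsum_enorm
    _ = wienerNorm f := by simp_rw [this, wienerNorm]

theorem hasSum_fourierCoeff {ι : Type*} {f : ι → C(AddCircle T, ℂ)} {g : C(AddCircle T, ℂ)}
    (h : HasSum f g) (n : ℤ) : HasSum (fun i => fourierCoeff (f i) n) (fourierCoeff g n) := by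
  let coeff : C(AddCircle T, ℂ) →L[ℂ] ℂ :=
    innerSL ℂ (fourierLp 2 n) ∘L ContinuousMap.toLp 2 haarAddCircle ℂ
  have coeff_apply (f : C(AddCircle T, ℂ)) : coeff f = fourierCoeff f n := by
    rw [← fourierCoeff_toLp, ← fourierBasis_repr, HilbertBasis.repr_apply_apply, coe_fourierBasis]
    rfl
  simpa only [coeff_apply] using coeff.hasSum h

theorem wienerNorm_le_tsum {ι : Type*} {f : ι → C(AddCircle T, ℂ)} {g : C(AddCircle T, ℂ)}
    (h : ∀ x, HasSum (fun i => f i x) (g x)) : wienerNorm g ≤ ∑' i, wienerNorm (f i) := by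
  by_cases htop : ∑' i, wienerNorm (f i) = ∞
  · simp [htop]
  have hf : Summable f := .of_enorm
    (ne_top_of_le_ne_top htop (ENNReal.tsum_le_tsum fun i => enorm_le_wienerNorm (f i)))
  have hfg : HasSum f g := by
    convert! hf.hasSum
    ext x
    exact (h x).unique (ContinuousMap.hasSum_apply hf.hasSum x)
  calc wienerNorm g = ∑' n, ‖∑' i, fourierCoeff (f i) n‖ₑ := by
        simp_rw [wienerNorm, (hasSum_fourierCoeff hfg _).tsum_eq]
    _ ≤ ∑' n, ∑' i, ‖fourierCoeff (f i) n‖ₑ :=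
        ENNReal.tsum_le_tsum fun n => enorm_tsum_le_tsum_enorm
    _ = ∑' i, wienerNorm (f i) := ENNReal.tsum_comm

theorem wienerNorm_smul (a : ℂ) (f : C(AddCircle T, ℂ)) :
    wienerNorm (a • f) = ‖a‖ₑ * wienerNorm f := by
  simp_rw [wienerNorm, ContinuousMap.coe_smul, fourierCoeff.const_smul, enorm_smul,
    ENNReal.tsum_mul_left]

theorem wienerNorm_fourier (n : ℤ) : wienerNorm (fourier (T := T) n) = 1 := by
  rw [wienerNorm, fourierCoeff_fourier, tsum_eq_single n (by simp +contextual)]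
  simp

theorem fourierCoeff_fourier_mul (m n : ℤ) (f : C(AddCircle T, ℂ)) :
    fourierCoeff (fourier m * f : C(AddCircle T, ℂ)) n = fourierCoeff f (n - m) := by
  simp_rw [fourierCoeff, ContinuousMap.mul_apply, smul_eq_mul, ← mul_assoc, ← fourier_add,
    neg_sub, sub_eq_neg_add]

theorem wienerNorm_fourier_mul (m : ℤ) (f : C(AddCircle T, ℂ)) :
    wienerNorm (fourier m * f) = wienerNorm f := by
  simp_rw [wienerNorm, fourierCoeff_fourier_mul]
  exact (Equiv.subRight m).tsum_eq fun n => ‖fourierCoeff f n‖ₑ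

theorem wienerNorm_eq_zero {f : C(AddCircle T, ℂ)} : wienerNorm f = 0 ↔ f = 0 := by
  refine ⟨fun h => by simpa [h] using enorm_le_wienerNorm f, fun h => ?_⟩
  rw [h, ← zero_smul ℂ 0, wienerNorm_smul, enorm_zero, zero_mul]

theorem wienerNorm_mul_le (f g : C(AddCircle T, ℂ)) :
    wienerNorm (f * g) ≤ wienerNorm f * wienerNorm g := by
  rcases eq_or_ne (wienerNorm g) 0 with hg | hg
  · rw [wienerNorm_eq_zero.mp hg, mul_zero, wienerNorm_eq_zero.mpr rfl, mul_zero]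
  rcases eq_or_ne (wienerNorm f) ∞ with hf | hf
  · rw [hf, ENNReal.top_mul hg]
    exact le_top
  have hfg : HasSum (fun m => fourierCoeff f m • (fourier m * g)) (f * g) := by
    simpa only [smul_mul_assoc] using (hasSum_fourier_series_of_wienerNorm_ne_top hf).mul_right g
  refine (wienerNorm_le_tsum (ContinuousMap.hasSum_apply hfg)).trans_eq ?_
  simp_rw [wienerNorm_smul, wienerNorm_fourier_mul, ENNReal.tsum_mul_right, wienerNorm]

theorem wienerNorm_pow_le (f : C(AddCircle T, ℂ)) (k : ℕ) :
    wienerNorm (f ^ k) ≤ wienerNorm f ^ k := by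
  induction k with
  | zero =>
    have : (1 : C(AddCircle T, ℂ)) = fourier 0 := by ext; simp
    simp [this, wienerNorm_fourier]
  | succ k ih =>
    rw [pow_succ, pow_succ]
    exact (wienerNorm_mul_le _ _).trans (mul_le_mul_left ih _)

theorem wienerNorm_ne_top_of_hasSum_mul_pow {g : ℕ → C(AddCircle T, ℂ)} {q H : C(AddCircle T, ℂ)}
    {A r : ℝ≥0∞} (hA : A ≠ ∞) (hg : ∀ k, wienerNorm (g k) ≤ A * r⁻¹ ^ k)
    (hq : wienerNorm q < r) (hH : ∀ x, HasSum (fun k => g k x * q x ^ k) (H x)) :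
    wienerNorm H ≠ ∞ := by
  have hratio : r⁻¹ * wienerNorm q < 1 := by
    rw [mul_comm, ← div_eq_mul_inv]
    exact ENNReal.div_lt_of_lt_mul (by simpa using hq)
  refine ne_top_of_le_ne_top (b := A * (1 - r⁻¹ * wienerNorm q)⁻¹) ?_ ?_
  · exact ENNReal.mul_ne_top hA (ENNReal.inv_ne_top.mpr (tsub_pos_of_lt hratio).ne')
  calc wienerNorm H ≤ ∑' k, wienerNorm (g k * q ^ k) := wienerNorm_le_tsum hH
    _ ≤ ∑' k, A * (r⁻¹ * wienerNorm q) ^ k := ENNReal.tsum_le_tsum fun k => by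
        rw [mul_pow, ← mul_assoc]
        exact (wienerNorm_mul_le _ _).trans (mul_le_mul' (hg k) (wienerNorm_pow_le q k))
    _ = A * (1 - r⁻¹ * wienerNorm q)⁻¹ := by rw [ENNReal.tsum_mul_left, ENNReal.tsum_geometric]

end WienerNorm

section Smooth

variable {T : ℝ}

theorem exists_continuousMap_coe_eq {u : ℝ → ℂ} (hper : Function.Periodic u T)
    (hu : Continuous u) : ∃ f : C(AddCircle T, ℂ), ∀ t : ℝ, f t = u t :=
  ⟨⟨hper.lift, continuous_coinduced_dom.mpr hu⟩, fun _ => rfl⟩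

variable [Fact (0 < T)]

theorem enorm_le_of_forall_coe {f : C(AddCircle T, ℂ)} {M : ℝ≥0} (hf : ∀ t : ℝ, ‖f t‖ ≤ M) :
    ‖f‖ₑ ≤ M :=
  enorm_le_coe.mpr <| (ContinuousMap.norm_le f M.2).mpr fun x => QuotientAddGroup.induction_on x hf

theorem norm_fourierCoeff_le (f : C(AddCircle T, ℂ)) (n : ℤ) : ‖fourierCoeff f n‖ ≤ ‖f‖ := by
  have hle (t : AddCircle T) : ‖fourier (-n) t • f t‖ ≤ ‖f‖ := by
    rw [norm_smul, fourier_apply, Circle.norm_coe, one_mul]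
    exact f.norm_coe_le_norm t
  simpa [fourierCoeff] using
    MeasureTheory.norm_integral_le_of_norm_le_const (μ := haarAddCircle) (.of_forall hle)

theorem fourierCoeff_of_hasDerivAt {f f' : C(AddCircle T, ℂ)}
    (hf : ∀ t : ℝ, HasDerivAt (fun s : ℝ => f s) (f' t) t) {n : ℤ} (hn : n ≠ 0) :
    fourierCoeff f n = T / (2 * π * I * n) * fourierCoeff f' n := by
  have hT : 0 < T := Fact.out
  have coeff_eq (g : C(AddCircle T, ℂ)) :
      fourierCoeff g n = fourierCoeffOn (lt_add_of_pos_right 0 hT) (fun s : ℝ => g s) n := by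
    rw [fourierCoeffOn_eq_integral, fourierCoeff_eq_intervalIntegral _ _ 0, add_sub_cancel_left]
  rw [coeff_eq f, coeff_eq f', fourierCoeffOn_of_hasDerivAt _ hn (fun t _ => hf t)
    ((f'.continuous.comp (AddCircle.continuous_mk' T)).intervalIntegrable _ _)]
  have : f (0 + T : ℝ) = f (0 : ℝ) := by rw [AddCircle.coe_add_period]
  rw [this]
  push_cast
  ring

variable (T) in
theorem exists_wienerNorm_le_of_hasDerivAt_two : ∃ C : ℝ≥0, ∀ f f' f'' : C(AddCircle T, ℂ),
    (∀ t : ℝ, HasDerivAt (fun s : ℝ => f s) (f' t) t) →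
    (∀ t : ℝ, HasDerivAt (fun s : ℝ => f' s) (f'' t) t) →
    wienerNorm f ≤ ‖f‖ₑ + C * ‖f''‖ₑ := by
  -- Integrating by parts twice multiplies the `n`-th coefficient by `a n` for `n ≠ 0`.
  let a : ℤ → ℂ := fun n => (T / (2 * π * I * n)) ^ 2
  have ha : Summable a := by
    have : Summable fun n : ℤ => (1 / (n : ℂ) ^ 2) := by
      refine Summable.of_norm ?_
      simpa using Real.summable_one_div_int_pow.mpr one_lt_two
    refine (this.mul_left ((T / (2 * π * I)) ^ 2)).congr fun n => ?_
    simp only [a]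
    ring
  obtain ⟨C, hC⟩ := ENNReal.canLift.prf _ (tsum_enorm_ne_top_iff_summable_norm.mpr ha.norm)
  refine ⟨C, fun f f' f'' hf hf' => ?_⟩
  have hcoeff (n : ℤ) : ‖fourierCoeff f n‖ₑ ≤
      (Pi.single 0 ‖f‖ₑ : ℤ → ℝ≥0∞) n + ‖a n‖ₑ * ‖f''‖ₑ := by
    rcases eq_or_ne n 0 with rfl | hn
    · refine le_add_right ?_
      simpa using enorm_le_iff_norm_le.mpr (norm_fourierCoeff_le f 0)
    · rw [fourierCoeff_of_hasDerivAt hf hn, fourierCoeff_of_hasDerivAt hf' hn, ← mul_assoc, ← sq,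
        enorm_mul]
      exact le_add_left (mul_le_mul_right (enorm_le_iff_norm_le.mpr (norm_fourierCoeff_le f'' n)) _)
  calc wienerNorm f ≤ ∑' n, ((Pi.single 0 ‖f‖ₑ : ℤ → ℝ≥0∞) n + ‖a n‖ₑ * ‖f''‖ₑ) :=
        ENNReal.tsum_le_tsum hcoeff
    _ = ‖f‖ₑ + C * ‖f''‖ₑ := by
        rw [ENNReal.tsum_add, tsum_pi_single, ENNReal.tsum_mul_right, hC]

end Smooth

section Strip

/-- The open horizontal strip of half-width `δ` around the real axis, used as the common domain of
holomorphic extensions of periodic functions. -/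
def horizontalStrip (δ : ℝ) : Set ℂ :=
  {z | |z.im| < δ}

theorem isOpen_horizontalStrip (δ : ℝ) : IsOpen (horizontalStrip δ) :=
  isOpen_lt (by fun_prop) continuous_const

theorem ofReal_mem_horizontalStrip {δ : ℝ} (hδ : 0 < δ) (t : ℝ) : (t : ℂ) ∈ horizontalStrip δ := by
  simpa [horizontalStrip]

theorem closedBall_subset_horizontalStrip {δ : ℝ} (t : ℝ) {r : ℝ} (hr : r < δ) :
    Metric.closedBall (t : ℂ) r ⊆ horizontalStrip δ := fun z hz => by
  have him := Complex.abs_im_le_norm (z - t)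
  rw [Complex.sub_im, Complex.ofReal_im, sub_zero] at him
  exact (him.trans (mem_closedBall_iff_norm.mp hz)).trans_lt hr

variable {T : ℝ}

theorem exists_continuousMap_coe_eq_hasDerivAt {δ : ℝ} (hδ : 0 < δ) {g : ℂ → ℂ}
    (hper : Function.Periodic g T) (hg : DifferentiableOn ℂ g (horizontalStrip δ)) :
    ∃ f : C(AddCircle T, ℂ), (∀ t : ℝ, f t = g t) ∧
      ∀ t : ℝ, HasDerivAt (fun s : ℝ => f s) (deriv g t) t := by
  have hderiv (t : ℝ) : HasDerivAt (fun s : ℝ => g s) (deriv g t) t :=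
    (hg.differentiableAt ((isOpen_horizontalStrip δ).mem_nhds
      (ofReal_mem_horizontalStrip hδ t))).hasDerivAt.comp_ofReal
  have hcont : Continuous fun s : ℝ => g s :=
    continuous_iff_continuousAt.mpr fun t => (hderiv t).continuousAt
  obtain ⟨f, hf⟩ := exists_continuousMap_coe_eq (T := T) (fun t => by simpa using hper t) hcont
  exact ⟨f, hf, by simpa only [hf] using hderiv⟩

theorem periodic_deriv {g : ℂ → ℂ} {c : ℂ} (hg : Function.Periodic g c) :
    Function.Periodic (deriv g) c := fun z => by
  rw [← deriv_comp_add_const, funext hg]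

variable [Fact (0 < T)]

variable (T) in
theorem exists_wienerNorm_le_of_differentiableOn_horizontalStrip {δ : ℝ} (hδ : 0 < δ) :
    ∃ C : ℝ≥0, ∀ (g : ℂ → ℂ) (M : ℝ≥0), Function.Periodic g T →
      DifferentiableOn ℂ g (horizontalStrip δ) → (∀ z ∈ horizontalStrip δ, ‖g z‖ ≤ M) →
      ∃ f : C(AddCircle T, ℂ), (∀ t : ℝ, f t = g t) ∧ wienerNorm f ≤ C * M := by
  obtain ⟨C, hC⟩ := exists_wienerNorm_le_of_hasDerivAt_two T
  lift δ to ℝ≥0 using hδ.le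
  refine ⟨1 + C * (2 / (δ / 2) ^ 2), fun g M hper hg hM => ?_⟩
  have hopen := isOpen_horizontalStrip δ
  obtain ⟨f, hf, hdf⟩ := exists_continuousMap_coe_eq_hasDerivAt hδ hper hg
  obtain ⟨f', hf', hdf'⟩ :=
    exists_continuousMap_coe_eq_hasDerivAt hδ (periodic_deriv hper) (hg.deriv hopen)
  obtain ⟨f'', hf'', -⟩ := exists_continuousMap_coe_eq_hasDerivAt hδ
    (periodic_deriv (periodic_deriv hper)) ((hg.deriv hopen).deriv hopen)
  have cauchy (t : ℝ) : ‖deriv (deriv g) t‖ ≤ (2 * M / (δ / 2) ^ 2 : ℝ≥0) := by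
    have hsub : Metric.closedBall (t : ℂ) (δ / 2) ⊆ horizontalStrip δ :=
      closedBall_subset_horizontalStrip t (half_lt_self hδ)
    simpa [iteratedDeriv_succ, iteratedDeriv_zero] using
      Complex.norm_iteratedDeriv_le_of_forall_mem_sphere_norm_le 2 (half_pos hδ)
        ((hg.mono hsub).diffContOnCl_ball subset_rfl)
        fun z hz => hM z (hsub (Metric.sphere_subset_closedBall hz))
  have hfM : ‖f‖ₑ ≤ M :=
    enorm_le_of_forall_coe fun t => by simpa only [hf] using hM t (ofReal_mem_horizontalStrip hδ t)
  have hf''M : ‖f''‖ₑ ≤ (2 * M / (δ / 2) ^ 2 : ℝ≥0) :=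
    enorm_le_of_forall_coe fun t => by simpa only [hf''] using cauchy t
  refine ⟨f, hf, ?_⟩
  calc wienerNorm f ≤ ‖f‖ₑ + C * ‖f''‖ₑ :=
        hC f f' f'' (by simpa only [hf'] using hdf) (by simpa only [hf''] using hdf')
    _ ≤ M + C * (2 * M / (δ / 2) ^ 2 : ℝ≥0) := by gcongr
    _ = (1 + C * (2 / (δ / 2) ^ 2) : ℝ≥0) * M := by
        norm_cast
        ring

theorem exists_mapsTo_horizontalStrip {P : ℂ → ℂ} (hP : Continuous P)
    (hper : Function.Periodic P T) {U : Set ℂ} (hU : IsOpen U) (hPU : ∀ t : ℝ, P t ∈ U) :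
    ∃ δ > 0, Set.MapsTo P (horizontalStrip δ) U := by
  have hnear : ∀ᶠ y : ℝ in 𝓝 0, ∀ x ∈ Set.Icc 0 T, P (x + y * I) ∈ U := by
    refine isCompact_Icc.eventually_forall_of_forall_eventually fun x _ => ?_
    have hcont : Continuous fun w : ℝ × ℝ => P (w.2 + w.1 * I) := by fun_prop
    exact hcont.continuousAt.eventually_mem (hU.mem_nhds (by simpa using hPU x))
  obtain ⟨δ, hδ, hball⟩ := Metric.eventually_nhds_iff.mp hnear
  refine ⟨δ, hδ, fun z hz => ?_⟩
  have hperx : Function.Periodic (fun x : ℝ => P (x + z.im * I)) T := fun x => by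
    simpa only [ofReal_add, add_right_comm] using hper (x + z.im * I)
  obtain ⟨x, hx, hzx⟩ := hperx.exists_mem_Ico₀ Fact.out z.re
  rw [← Complex.re_add_im z, hzx]
  exact hball (by simpa [horizontalStrip] using hz) x (Set.Ico_subset_Icc_self hx)

end Strip

section TaylorCoeff

/-- The `k`-th Taylor coefficient `h⁽ᵏ⁾(z) / k!` of `h` at `z`, regarded as a function of the base
point `z`. -/
noncomputable def taylorCoeff (h : ℂ → ℂ) (k : ℕ) (z : ℂ) : ℂ :=
  (k ! : ℂ)⁻¹ * iteratedDeriv k h z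

variable {h : ℂ → ℂ} {V : Set ℂ}

theorem differentiableOn_taylorCoeff (hV : IsOpen V) (hh : DifferentiableOn ℂ h V) (k : ℕ) :
    DifferentiableOn ℂ (taylorCoeff h k) V := by
  have := ((hh.analyticOnNhd hV).iterated_deriv k).differentiableOn
  rw [← iteratedDeriv_eq_iterate] at this
  exact this.const_mul _

theorem hasSum_taylorCoeff_mul_pow {z w : ℂ} {r : ℝ} (hh : DifferentiableOn ℂ h (Metric.ball z r))
    (hw : w ∈ Metric.ball z r) : HasSum (fun k => taylorCoeff h k z * (w - z) ^ k) (h w) := by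
  refine (Complex.hasSum_taylorSeries_on_ball hh hw).congr_fun fun k => ?_
  simp only [taylorCoeff, smul_eq_mul]
  ring

theorem norm_taylorCoeff_le {z : ℂ} {r M : ℝ} (hr : 0 < r)
    (hh : DifferentiableOn ℂ h (Metric.closedBall z r))
    (hM : ∀ w ∈ Metric.closedBall z r, ‖h w‖ ≤ M) (k : ℕ) :
    ‖taylorCoeff h k z‖ ≤ M * r⁻¹ ^ k := by
  have := Complex.norm_iteratedDeriv_le_of_forall_mem_sphere_norm_le k hr
    (hh.diffContOnCl_ball subset_rfl) fun w hw => hM w (Metric.sphere_subset_closedBall hw)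
  rw [taylorCoeff, norm_mul, norm_inv, Complex.norm_natCast, inv_pow, ← div_eq_mul_inv,
    inv_mul_le_iff₀ (by positivity), ← mul_div_assoc]
  exact this

theorem exists_norm_taylorCoeff_le {K : Set ℂ} (hK : IsCompact K) (hV : IsOpen V) (hKV : K ⊆ V)
    (hh : DifferentiableOn ℂ h V) : ∃ r : ℝ≥0, 0 < r ∧ ∃ M : ℝ≥0, ∀ z ∈ Metric.thickening r K,
      Metric.ball z r ⊆ V ∧ ∀ k, ‖taylorCoeff h k z‖ ≤ M * (r : ℝ)⁻¹ ^ k := by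
  obtain ⟨R, hR, hRV⟩ := hK.exists_cthickening_subset_open hV hKV
  obtain ⟨M, hM⟩ := hK.cthickening.exists_bound_of_continuousOn (hh.continuousOn.mono hRV)
  lift R to ℝ≥0 using hR.le
  refine ⟨R / 2, half_pos hR, M.toNNReal, fun z hz => ?_⟩
  have hball : Metric.closedBall z (R / 2 : ℝ≥0) ⊆ Metric.cthickening R K := by
    have hcth := Metric.closedBall_subset_cthickening (Metric.thickening_subset_cthickening _ _ hz)
      (R / 2 : ℝ≥0)
    have hhalf : (0 : ℝ) ≤ (R / 2 : ℝ≥0) := NNReal.zero_le_coe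
    refine hcth.trans ((Metric.cthickening_cthickening_subset hhalf hhalf K).trans_eq ?_)
    rw [← NNReal.coe_add, add_halves]
  exact ⟨Metric.ball_subset_closedBall.trans (hball.trans hRV),
    norm_taylorCoeff_le (half_pos hR) (hh.mono (hball.trans hRV))
      fun w hw => (hM w (hball hw)).trans (Real.le_coe_toNNReal M)⟩

end TaylorCoeff

section Composition

variable {T : ℝ} [Fact (0 < T)]

theorem exists_finset_wienerNorm_sub_lt {F : C(AddCircle T, ℂ)} (hF : wienerNorm F ≠ ∞)
    {ε : ℝ≥0∞} (hε : ε ≠ 0) :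
    ∃ s : Finset ℤ, wienerNorm (F - ∑ n ∈ s, fourierCoeff F n • fourier n) < ε := by
  obtain ⟨s, hs⟩ := ((ENNReal.tendsto_tsum_compl_atTop_zero hF).eventually_lt_const
    (pos_iff_ne_zero.mpr hε)).exists
  have htail : HasSum (fun n : {n // n ∉ s} => fourierCoeff F n • fourier (n : ℤ))
      (F - ∑ n ∈ s, fourierCoeff F n • fourier n) := by
    refine s.hasSum_compl_iff (f := fun n => fourierCoeff F n • fourier n) |>.mpr ?_
    rw [sub_add_cancel]
    exact hasSum_fourier_series_of_wienerNorm_ne_top hF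
  refine ⟨s, lt_of_le_of_lt (wienerNorm_le_tsum (ContinuousMap.hasSum_apply htail)) ?_⟩
  simpa only [wienerNorm_smul, wienerNorm_fourier, mul_one] using hs

theorem exists_entire_approx {F : C(AddCircle T, ℂ)} (hF : wienerNorm F ≠ ∞)
    {ε : ℝ≥0∞} (hε : ε ≠ 0) :
    ∃ (p : C(AddCircle T, ℂ)) (P : ℂ → ℂ), Differentiable ℂ P ∧ Function.Periodic P T ∧
      (∀ t : ℝ, p t = P t) ∧ wienerNorm (F - p) < ε := by
  have hT : (T : ℂ) ≠ 0 := Complex.ofReal_ne_zero.mpr (Fact.out : 0 < T).ne'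
  obtain ⟨s, hs⟩ := exists_finset_wienerNorm_sub_lt hF hε
  refine ⟨_, fun z => ∑ n ∈ s, fourierCoeff F n * Complex.exp (2 * π * I * n * z / T), ?_, ?_, ?_,
    hs⟩
  · fun_prop
  · intro z
    refine Finset.sum_congr rfl fun n _ => ?_
    rw [mul_add, add_div, mul_div_cancel_right₀ _ hT, mul_comm _ (n : ℂ),
      Complex.exp_periodic.int_mul n]
  · intro t
    simp

theorem exists_wienerNorm_comp_le {P : ℂ → ℂ} (hP : Differentiable ℂ P)
    (hper : Function.Periodic P T) {U : Set ℂ} (hU : IsOpen U) (hPU : ∀ t : ℝ, P t ∈ U) :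
    ∃ C : ℝ≥0, ∀ (u : ℂ → ℂ) (M : ℝ≥0), DifferentiableOn ℂ u U → (∀ z ∈ U, ‖u z‖ ≤ M) →
      ∃ f : C(AddCircle T, ℂ), (∀ t : ℝ, f t = u (P t)) ∧ wienerNorm f ≤ C * M := by
  obtain ⟨δ, hδ, hPδ⟩ := exists_mapsTo_horizontalStrip hP.continuous hper hU hPU
  obtain ⟨C, hC⟩ := exists_wienerNorm_le_of_differentiableOn_horizontalStrip T hδ
  exact ⟨C, fun u M hu hM => hC (u ∘ P) M (hper.comp u) (hu.comp hP.differentiableOn hPδ)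
    fun z hz => hM _ (hPδ hz)⟩

theorem wienerNorm_comp_ne_top {F H : C(AddCircle T, ℂ)} (hF : wienerNorm F ≠ ∞) {h : ℂ → ℂ}
    {V : Set ℂ} (hV : IsOpen V) (hFV : Set.range F ⊆ V) (hh : DifferentiableOn ℂ h V)
    (hH : ∀ x, H x = h (F x)) : wienerNorm H ≠ ∞ := by
  obtain ⟨r, hr, M, hM⟩ := exists_norm_taylorCoeff_le (isCompact_range F.continuous) hV hFV hh
  obtain ⟨p, P, hP, hper, hpP, hp⟩ :=
    exists_entire_approx hF (ENNReal.coe_ne_zero.mpr hr.ne')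
  have hFP (t : ℝ) : dist (F t) (P t) < r := by
    rw [← hpP, dist_eq_norm]
    exact ((F - p).norm_coe_le_norm t).trans_lt
      (enorm_lt_coe.mp ((enorm_le_wienerNorm _).trans_lt hp))
  have hPU (t : ℝ) : P t ∈ Metric.thickening r (Set.range F) :=
    Metric.mem_thickening_iff.mpr ⟨F t, Set.mem_range_self _, dist_comm (F t) (P t) ▸ hFP t⟩
  obtain ⟨C, hC⟩ := exists_wienerNorm_comp_le hP hper Metric.isOpen_thickening hPU
  have hdiff (k : ℕ) : DifferentiableOn ℂ (taylorCoeff h k) (Metric.thickening r (Set.range F)) :=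
    (differentiableOn_taylorCoeff hV hh k).mono fun z hz => (hM z hz).1 (Metric.mem_ball_self hr)
  choose g hg hgr using fun k =>
    hC (taylorCoeff h k) (M * r⁻¹ ^ k) (hdiff k) fun z hz => by simpa using (hM z hz).2 k
  have htaylor (t : ℝ) : HasSum (fun k => g k t * (F - p) t ^ k) (H t) := by
    simp only [hg, hH, ContinuousMap.sub_apply, hpP]
    exact hasSum_taylorCoeff_mul_pow (hh.mono (hM _ (hPU t)).1) (hFP t)
  refine wienerNorm_ne_top_of_hasSum_mul_pow (A := C * M) (r := r) (by finiteness)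
    (fun k => (hgr k).trans_eq ?_) hp fun x => QuotientAddGroup.induction_on x htaylor
  push_cast [ENNReal.coe_inv hr.ne']
  exact (mul_assoc _ _ _).symm

theorem exists_wienerNorm_ne_top_of_summable {c : ℤ → ℂ} (hc : Summable fun n => ‖c n‖) :
    ∃ F : C(AddCircle T, ℂ), wienerNorm F ≠ ∞ ∧ ∀ x, F x = ∑' n, c n * fourier n x := by
  have hsum : Summable fun n => c n • fourier (T := T) n := by
    refine .of_norm (hc.congr fun n => ?_)
    rw [norm_smul, fourier_norm, mul_one]
  refine ⟨∑' n, c n • fourier n,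
    ne_top_of_le_ne_top ?_ (wienerNorm_le_tsum (ContinuousMap.hasSum_apply hsum.hasSum)),
    fun x => (ContinuousMap.hasSum_apply hsum.hasSum x).tsum_eq.symm⟩
  simpa only [wienerNorm_smul, wienerNorm_fourier, mul_one] using
    tsum_enorm_ne_top_iff_summable_norm.mpr hc

end Composition

theorem wiener_levi_fourier_series_general {T : ℝ} (hT : 0 < T)
    (c : ℤ → ℂ) (hc : Summable fun n => ‖c n‖)
    (F : ℝ → ℂ)
    (hF : ∀ t : ℝ, F t = ∑' n : ℤ, c n * Complex.exp (2 * π * Complex.I * n * t / T))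
    (h : ℂ → ℂ) (V : Set ℂ) (hV : IsOpen V)
    (hFV : Set.range F ⊆ V)
    (hh : DifferentiableOn ℂ h V) :
    ∃ b : ℤ → ℂ, Summable (fun n => ‖b n‖) ∧
      ∀ t : ℝ, h (F t) = ∑' n : ℤ, b n * Complex.exp (2 * π * Complex.I * n * t / T) := by
  have : Fact (0 < T) := ⟨hT⟩
  obtain ⟨f, hf, hfc⟩ := exists_wienerNorm_ne_top_of_summable (T := T) hc
  have hFf (t : ℝ) : F t = f t := by simp_rw [hF, hfc, fourier_coe_apply]
  have hfV (x : AddCircle T) : f x ∈ V := by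
    induction x using QuotientAddGroup.induction_on with
    | H t => exact hFV ⟨t, hFf t⟩
  let H : C(AddCircle T, ℂ) := ⟨fun x => h (f x), hh.continuousOn.comp_continuous f.continuous hfV⟩
  have hH : wienerNorm H ≠ ∞ :=
    wienerNorm_comp_ne_top hf hV (Set.range_subset_iff.mpr hfV) hh fun _ => rfl
  refine ⟨fourierCoeff H, summable_norm_fourierCoeff_iff.mpr hH, fun t => ?_⟩
  have hsum : HasSum (fun n => fourierCoeff H n * fourier n (t : AddCircle T)) (h (f t)) :=
    ContinuousMap.hasSum_apply (hasSum_fourier_series_of_wienerNorm_ne_top hH) t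
  simp_rw [hFf, ← hsum.tsum_eq, fourier_coe_apply]

/-- **Wiener–Levi Theorem for Fourier series.** If `F t = Σ_{n ∈ ℤ} c n e^{2πint}` is an
absolutely convergent Fourier series and `h` is holomorphic on an open neighborhood of the
closure of the range of `F`, then `h ∘ F` also admits an absolutely convergent Fourier series
expansion. -/
theorem wiener_levi_fourier_series
    (c : ℤ → ℂ) (hc : Summable fun n => ‖c n‖)
    (F : ℝ → ℂ)
    (hF : ∀ t : ℝ, F t = ∑' n : ℤ, c n * Complex.exp (2 * π * Complex.I * n * t))
    (h : ℂ → ℂ) (V : Set ℂ) (hV : IsOpen V)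
    (hKV : closure (Set.range F) ⊆ V)
    (hh : DifferentiableOn ℂ h V) :
    ∃ b : ℤ → ℂ, Summable (fun n => ‖b n‖) ∧
      ∀ t : ℝ, h (F t) = ∑' n : ℤ, b n * Complex.exp (2 * π * Complex.I * n * t) := by
  simpa using wiener_levi_fourier_series_general one_pos c hc F (by simpa using hF) h V hV
    (subset_closure.trans hKV) hh
end

section
/- Let f ∈ L¹(ℝ) with Fourier transform f̂(y) = ∫_ℝ f(x) e^{-2πixy} dx, and let h be a holomorphic function on an open neighborhood of the closure of the range of f̂ such that h(0) = 0. Then there exists a function g ∈ L¹(ℝ) whose Fourier transform ĝ satisfies ĝ(y) = h(f̂(y)) for all y ∈ ℝ. -/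
open MeasureTheory Real
open scoped FourierTransform

/-!
Call `𝓕 L¹`, with the norm carried over from `L¹`, the Wiener algebra; it is closed under pointwise
products because convolution is a product on `L¹`. Multiplying by bump functions (which are
transforms of Schwartz functions) shows that membership is a local property, once a condition near
infinity is included.

Near a point `a`, `𝓕 f` differs from the constant `𝓕 f a` by a function of arbitrarily small Wiener
norm, and near infinity `𝓕 f` itself agrees with such a function. Both facts come from the
continuity of translation in `L¹`. The power series of `h` at `𝓕 f a`, respectively at `0`,
therefore converges in the Wiener norm when this small function is substituted. The constant term of
the series is harmless near `a`, where it can be multiplied by a bump function, and vanishes at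
infinity because `h 0 = 0`.
-/

open Filter Topology Set
open scoped Convolution

variable {E : Type*} [NormedAddCommGroup E] [InnerProductSpace ℝ E] [FiniteDimensional ℝ E]
  [MeasurableSpace E] [BorelSpace E]

/-- Evaluation of the Fourier transform at `y`, as a continuous linear functional on `L¹(E)`. -/
noncomputable def fourierEval (y : E) : (E →₁[volume] ℂ) →L[ℂ] ℂ :=
  BoundedContinuousFunction.evalCLM ℂ y ∘L Lp.fourierTransformCLM E ℂ

lemma fourierEval_apply (y : E) (g : E →₁[volume] ℂ) : fourierEval y g = 𝓕 (g : E → ℂ) y := rfl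

lemma fourierEval_toL1 {g : E → ℂ} (hg : Integrable g) (y : E) :
    fourierEval y (hg.toL1 g) = 𝓕 g y :=
  Real.fourier_congr_ae hg.coeFn_toL1 y

lemma fourierEval_vadd (t y : E) (g : E →₁[volume] ℂ) :
    fourierEval y (DomAddAct.mk t +ᵥ g) = 𝐞 (inner ℝ t y) • fourierEval y g := by
  have translate_ae : (DomAddAct.mk t +ᵥ g : E →₁[volume] ℂ) =ᵐ[volume] (g : E → ℂ) ∘ (· + t) := by
    filter_upwards [DomAddAct.vadd_Lp_ae_eq (DomAddAct.mk t) g] with x hx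
    simpa [add_comm] using hx
  rw [fourierEval_apply, Real.fourier_congr_ae translate_ae]
  exact congrFun (VectorFourier.fourierIntegral_comp_add_right 𝐞 volume (innerₗ E) _ t) y

lemma integral_norm_convolution_mul_le {𝕜 G : Type*} [RCLike 𝕜] [AddGroup G] [MeasurableSpace G]
    [MeasurableAdd₂ G] [MeasurableNeg G] {μ : Measure G} [SFinite μ] [μ.IsAddRightInvariant]
    {f g : G → 𝕜} (hf : Integrable f μ) (hg : Integrable g μ) :
    ∫ x, ‖(f ⋆[.mul 𝕜 𝕜, μ] g) x‖ ∂μ ≤ (∫ x, ‖f x‖ ∂μ) * ∫ x, ‖g x‖ ∂μ := by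
  calc ∫ x, ‖(f ⋆[.mul 𝕜 𝕜, μ] g) x‖ ∂μ
    _ ≤ ∫ x, ((‖f ·‖) ⋆[.mul ℝ ℝ, μ] (‖g ·‖)) x ∂μ := by
      refine integral_mono (hf.integrable_convolution _ hg).norm
        (hf.norm.integrable_convolution _ hg.norm) fun x ↦ ?_
      simpa [convolution_def] using norm_integral_le_integral_norm fun t ↦ f t * g (x - t)
    _ = (∫ x, ‖f x‖ ∂μ) * ∫ x, ‖g x‖ ∂μ := integral_convolution _ hf.norm hg.norm

lemma tendsto_integral_smul_comp_smul {V 𝕜 G : Type*} [NormedAddCommGroup V] [NormedSpace ℝ V]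
    [MeasurableSpace V] [OpensMeasurableSpace V] [SecondCountableTopology V] {μ : Measure V}
    [NormedField 𝕜] [NormedAddCommGroup G] [NormedSpace ℝ G] [NormedSpace 𝕜 G]
    {F : V → 𝕜} (hF : Integrable F μ) {u : V → G} (hu : Continuous u) {B : ℝ}
    (hB : ∀ t, ‖u t‖ ≤ B) :
    Tendsto (fun c : ℝ ↦ ∫ t, F t • u (c • t) ∂μ) (𝓝 0) (𝓝 (∫ t, F t • u 0 ∂μ)) := by
  refine tendsto_integral_filter_of_dominated_convergence (fun t ↦ ‖F t‖ * B)
    (.of_forall fun c ↦ ?_) (.of_forall fun c ↦ .of_forall fun t ↦ ?_) (hF.norm.mul_const B)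
    (.of_forall fun t ↦ ?_)
  · exact hF.aestronglyMeasurable.smul (hu.comp (continuous_const_smul c)).aestronglyMeasurable
  · exact (norm_smul_le _ _).trans (by gcongr; exact hB _)
  · have : Continuous fun c : ℝ ↦ F t • u (c • t) := by fun_prop
    simpa using this.tendsto 0

/-- `HasWienerNormLE φ C` says that `φ` has norm at most `C` in the Wiener algebra: it is the
Fourier transform of an integrable function with `L¹` norm at most `C`. -/
def HasWienerNormLE (φ : E → ℂ) (C : ℝ) : Prop :=
  ∃ g : E → ℂ, Integrable g ∧ ∫ x, ‖g x‖ ≤ C ∧ 𝓕 g = φ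

lemma hasWienerNormLE_iff_exists_L1 {φ : E → ℂ} {C : ℝ} :
    HasWienerNormLE φ C ↔ ∃ g : E →₁[volume] ℂ, ‖g‖ ≤ C ∧ ∀ y, fourierEval y g = φ y := by
  constructor
  · rintro ⟨g, hg, hgC, rfl⟩
    exact ⟨hg.toL1 g, (L1.norm_of_fun_eq_integral_norm _).trans_le hgC, fourierEval_toL1 hg⟩
  · rintro ⟨g, hgC, hg⟩
    exact ⟨g, L1.integrable_coeFn g, (L1.norm_eq_integral_norm g).symm.trans_le hgC, funext hg⟩

namespace HasWienerNormLE

variable {φ ψ : E → ℂ} {C D : ℝ}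

lemma nonneg (hφ : HasWienerNormLE φ C) : 0 ≤ C := by
  obtain ⟨g, -, hgC, -⟩ := hφ
  exact (integral_nonneg fun x ↦ norm_nonneg (g x)).trans hgC

lemma norm_apply_le (hφ : HasWienerNormLE φ C) (y : E) : ‖φ y‖ ≤ C := by
  obtain ⟨g, -, hgC, rfl⟩ := hφ
  exact (VectorFourier.norm_fourierIntegral_le_integral_norm _ _ _ _ _).trans hgC

lemma const_smul (hφ : HasWienerNormLE φ C) (c : ℂ) : HasWienerNormLE (c • φ) (‖c‖ * C) := by
  obtain ⟨g, hg, hgC, rfl⟩ := hφ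
  refine ⟨c • g, hg.smul c, ?_, VectorFourier.fourierIntegral_const_smul _ _ _ _ _⟩
  simp only [Pi.smul_apply, norm_smul, integral_const_mul]
  gcongr

lemma mul (hφ : HasWienerNormLE φ C) (hψ : HasWienerNormLE ψ D) :
    HasWienerNormLE (φ * ψ) (C * D) := by
  have hC := hφ.nonneg
  obtain ⟨f, hf, hfC, rfl⟩ := hφ
  obtain ⟨g, hg, hgD, rfl⟩ := hψ
  refine ⟨f ⋆[.mul ℂ ℂ] g, hf.integrable_convolution _ hg, ?_,
    funext (Real.fourier_mul_convolution_eq hf hg)⟩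
  exact (integral_norm_convolution_mul_le hf hg).trans (by gcongr)

lemma pow_succ (hφ : HasWienerNormLE φ C) (n : ℕ) :
    HasWienerNormLE (φ ^ (n + 1)) (C ^ (n + 1)) := by
  induction n with
  | zero => simpa using hφ
  | succ n ih => simpa only [_root_.pow_succ _ (n + 1)] using ih.mul hφ

lemma of_hasSum {ι : Type*} {φ : ι → E → ℂ} {C : ι → ℝ} (hφ : ∀ i, HasWienerNormLE (φ i) (C i))
    (hC : Summable C) (hψ : ∀ y, HasSum (fun i ↦ φ i y) (ψ y)) :
    HasWienerNormLE ψ (∑' i, C i) := by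
  choose g hgC hg using fun i ↦ hasWienerNormLE_iff_exists_L1.1 (hφ i)
  have g_summable : Summable g := .of_norm_bounded hC hgC
  refine hasWienerNormLE_iff_exists_L1.2
    ⟨∑' i, g i, tsum_of_norm_bounded hC.hasSum hgC, fun y ↦ ?_⟩
  refine ((fourierEval y).hasSum g_summable.hasSum).unique ?_
  simpa only [hg] using hψ y

lemma comp_hasFPowerSeriesOnBall (hφ : HasWienerNormLE φ C) {h : ℂ → ℂ}
    {p : FormalMultilinearSeries ℂ ℂ ℂ} {z : ℂ} {r : ENNReal} (hp : HasFPowerSeriesOnBall h p z r)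
    (hC : ENNReal.ofReal C < r) :
    HasWienerNormLE (fun y ↦ h (z + φ y) - h z) (∑' n, ‖p.coeff (n + 1)‖ * C ^ (n + 1)) := by
  refine of_hasSum (fun n ↦ (hφ.pow_succ n).const_smul (p.coeff (n + 1))) ?_ fun y ↦ ?_
  · have := p.summable_norm_mul_pow (hC.trans_le hp.r_le)
    rw [← summable_nat_add_iff 1] at this
    simpa [← FormalMultilinearSeries.norm_apply_eq_norm_coef, hφ.nonneg] using this
  · have mem_ball : φ y ∈ Metric.eball (0 : ℂ) r := by
      rw [Metric.mem_eball, edist_zero_right, ← ofReal_norm]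
      exact (ENNReal.ofReal_le_ofReal (hφ.norm_apply_le y)).trans_lt hC
    have := (hasSum_nat_add_iff' 1).2 (hp.hasSum mem_ball)
    simpa [← hp.coeff_zero 0, mul_comm] using this

lemma comp_sub_const (hφ : HasWienerNormLE φ C) (a : E) :
    HasWienerNormLE (fun y ↦ φ (y - a)) C := by
  obtain ⟨g, hg, hgC, rfl⟩ := hφ
  refine ⟨fun x ↦ 𝐞 (inner ℝ x a) • g x, ?_, by simpa using hgC, ?_⟩
  · simpa using (Real.fourierIntegral_convergent_iff (-a)).2 hg
  · ext y
    simp only [Real.fourier_eq, smul_smul, ← AddChar.map_add_eq_mul, inner_sub_right, neg_sub,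
      neg_add_eq_sub]

lemma comp_const_smul (hφ : HasWienerNormLE φ C) {c : ℝ} (hc : c ≠ 0) :
    HasWienerNormLE (fun y ↦ φ (c • y)) C := by
  obtain ⟨g, hg, hgC, rfl⟩ := hφ
  set J : ℝ := |c ^ Module.finrank ℝ E| with hJ
  have J_pos : 0 < J := abs_pos.2 (pow_ne_zero _ hc)
  refine ⟨fun x ↦ J⁻¹ • g (c⁻¹ • x), (hg.comp_smul (inv_ne_zero hc)).smul J⁻¹, ?_, ?_⟩
  · simp only [norm_smul, integral_const_mul, Measure.integral_comp_inv_smul volume (‖g ·‖)]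
    rwa [Real.norm_of_nonneg (by positivity), smul_eq_mul, inv_mul_cancel_left₀ J_pos.ne']
  · ext y
    have change_variables :=
      Measure.integral_comp_inv_smul volume (fun x ↦ 𝐞 (-inner ℝ x (c • y)) • g x) c
    simp only [inner_smul_left, inner_smul_right, conj_trivial,
      mul_inv_cancel_left₀ hc] at change_variables
    simp only [Real.fourier_eq, smul_comm _ J⁻¹, integral_smul, inner_smul_right,
      change_variables, ← hJ, inv_smul_smul₀ J_pos.ne']

end HasWienerNormLE

variable (E) in
/-- The Wiener algebra: the Fourier transforms of integrable functions, as an algebra of functions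
under pointwise operations. It has no unit in general. -/
def wienerAlgebra : NonUnitalSubalgebra ℂ (E → ℂ) where
  carrier := {φ | ∃ g : E → ℂ, Integrable g ∧ 𝓕 g = φ}
  zero_mem' := ⟨0, integrable_zero .., by ext; simp [Real.fourier_eq]⟩
  add_mem' := by
    rintro _ _ ⟨f, hf, rfl⟩ ⟨g, hg, rfl⟩
    refine ⟨f + g, hf.add hg, ?_⟩
    exact VectorFourier.fourierIntegral_add Real.continuous_fourierChar continuous_inner hf hg
  mul_mem' := by
    rintro _ _ ⟨f, hf, rfl⟩ ⟨g, hg, rfl⟩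
    exact ⟨_, hf.integrable_convolution (.mul ℂ ℂ) hg,
      funext (Real.fourier_mul_convolution_eq hf hg)⟩
  smul_mem' := by
    rintro c _ ⟨g, hg, rfl⟩
    exact ⟨c • g, hg.smul c, VectorFourier.fourierIntegral_const_smul _ _ _ _ _⟩

section WienerAlgebra

variable {φ ψ : E → ℂ}

lemma mem_wienerAlgebra_iff_exists_hasWienerNormLE :
    φ ∈ wienerAlgebra E ↔ ∃ C, HasWienerNormLE φ C :=
  ⟨fun ⟨g, hg, hgφ⟩ ↦ ⟨_, g, hg, le_rfl, hgφ⟩, fun ⟨_, g, hg, _, hgφ⟩ ↦ ⟨g, hg, hgφ⟩⟩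

lemma HasWienerNormLE.mem_wienerAlgebra {C : ℝ} (hφ : HasWienerNormLE φ C) :
    φ ∈ wienerAlgebra E :=
  mem_wienerAlgebra_iff_exists_hasWienerNormLE.2 ⟨C, hφ⟩

lemma comp_sub_const_mem_wienerAlgebra (hφ : φ ∈ wienerAlgebra E) (a : E) :
    (fun y ↦ φ (y - a)) ∈ wienerAlgebra E :=
  let ⟨_, hC⟩ := mem_wienerAlgebra_iff_exists_hasWienerNormLE.1 hφ
  (hC.comp_sub_const a).mem_wienerAlgebra

lemma schwartzMap_mem_wienerAlgebra (s : SchwartzMap E ℂ) : ⇑s ∈ wienerAlgebra E := by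
  refine ⟨⇑(𝓕⁻ s : SchwartzMap E ℂ), SchwartzMap.integrable _, ?_⟩
  rw [← SchwartzMap.fourier_coe, FourierTransform.fourier_fourierInv_eq]

lemma contDiffBump_mem_wienerAlgebra {a : E} (η : ContDiffBump a) :
    (fun y ↦ (η y : ℂ)) ∈ wienerAlgebra E :=
  have compact_support : HasCompactSupport fun y ↦ (η y : ℂ) :=
    η.hasCompactSupport.comp_left Complex.ofReal_zero
  schwartzMap_mem_wienerAlgebra
    (compact_support.toSchwartzMap (Complex.ofRealCLM.contDiff.comp η.contDiff))

-- If `φ = 𝓕 F` and `ψ = 𝓕 g`, this product is the Fourier transform of the `L¹`-valued integral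
-- `∫ t, F t • (g (· - c • t) - g)`, which is small because translation is continuous on `L¹`.
lemma eventually_hasWienerNormLE_sub_mul (hφ : φ ∈ wienerAlgebra E) (hψ : ψ ∈ wienerAlgebra E)
    {ε : ℝ} (hε : 0 < ε) :
    ∀ᶠ c : ℝ in 𝓝 0, HasWienerNormLE (fun y ↦ (φ (c • y) - φ 0) * ψ y) ε := by
  obtain ⟨F, hF, rfl⟩ := hφ
  obtain ⟨C, hψC⟩ := mem_wienerAlgebra_iff_exists_hasWienerNormLE.1 hψ
  obtain ⟨g, -, hg⟩ := hasWienerNormLE_iff_exists_L1.1 hψC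
  let u (t : E) : E →₁[volume] ℂ := (DomAddAct.mk (-t) +ᵥ g) - g
  have u_continuous : Continuous u := by
    have : Fact ((1 : ENNReal) ≠ ⊤) := ⟨ENNReal.one_ne_top⟩
    exact ((DomAddAct.continuous_mk.comp continuous_neg).vadd continuous_const).sub
      continuous_const
  have norm_u_le (t : E) : ‖u t‖ ≤ ‖g‖ + ‖g‖ :=
    (norm_sub_le _ _).trans_eq (by rw [DomAddAct.norm_vadd_Lp])
  have fourierEval_u (t y : E) : fourierEval y (u t) = (𝐞 (-inner ℝ t y) - 1 : ℂ) * ψ y := by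
    simp only [u, map_sub, fourierEval_vadd, inner_neg_left, hg, Circle.smul_def, smul_eq_mul,
      sub_mul, one_mul]
  have average_tendsto : Tendsto (fun c : ℝ ↦ ∫ t, F t • u (c • t)) (𝓝 0) (𝓝 0) := by
    simpa [u] using tendsto_integral_smul_comp_smul hF u_continuous norm_u_le
  filter_upwards [average_tendsto.norm.eventually_le_const (by simpa using hε)] with c hc
  refine hasWienerNormLE_iff_exists_L1.2 ⟨_, hc, fun y ↦ ?_⟩
  have average_integrable : Integrable fun t ↦ F t • u (c • t) :=
    hF.smul_bdd _ (u_continuous.comp (continuous_const_smul c)).aestronglyMeasurable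
      (.of_forall fun t ↦ norm_u_le _)
  have phase_integrable (w : E) := (Real.fourierIntegral_convergent_iff (f := F) w).2 hF
  rw [← ContinuousLinearMap.integral_comp_comm _ average_integrable, Real.fourier_eq,
    Real.fourier_eq, ← integral_sub (phase_integrable _) (phase_integrable _),
    ← integral_mul_const]
  congr with t
  simp only [map_smul, fourierEval_u, inner_smul_left, inner_smul_right, inner_zero_right,
    conj_trivial, Circle.smul_def, smul_eq_mul, neg_zero, AddChar.map_zero_eq_one, Circle.coe_one]
  ring

lemma exists_hasWienerNormLE_eventually_nhds_eq_add (hφ : φ ∈ wienerAlgebra E) (a : E) {ε : ℝ}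
    (hε : 0 < ε) : ∃ ψ, HasWienerNormLE ψ ε ∧ ∀ᶠ y in 𝓝 a, φ y = φ a + ψ y := by
  let η : ContDiffBump (0 : E) := ⟨1, 2, one_pos, one_lt_two⟩
  have small := eventually_hasWienerNormLE_sub_mul
    (comp_sub_const_mem_wienerAlgebra hφ (-a)) (contDiffBump_mem_wienerAlgebra η) hε
  obtain ⟨c, hψ, hc : 0 < c⟩ :=
    ((small.filter_mono nhdsWithin_le_nhds).and (self_mem_nhdsWithin (s := Ioi 0))).exists
  refine ⟨_, (hψ.comp_const_smul (inv_ne_zero hc.ne')).comp_sub_const a, ?_⟩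
  filter_upwards [Metric.closedBall_mem_nhds a hc] with y hy
  have η_eq_one : η (c⁻¹ • (y - a)) = 1 := by
    apply η.one_of_mem_closedBall
    rw [mem_closedBall_zero_iff, norm_smul, norm_inv, Real.norm_of_nonneg hc.le,
      inv_mul_le_iff₀ hc]
    simpa [η, dist_eq_norm] using hy
  simp [η_eq_one, smul_inv_smul₀ hc.ne']

lemma exists_hasWienerNormLE_eventuallyEq_cocompact (hφ : φ ∈ wienerAlgebra E) {ε : ℝ}
    (hε : 0 < ε) : ∃ ψ, HasWienerNormLE ψ ε ∧ φ =ᶠ[cocompact E] ψ := by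
  let η : ContDiffBump (0 : E) := ⟨1, 2, one_pos, one_lt_two⟩
  have small := eventually_hasWienerNormLE_sub_mul (contDiffBump_mem_wienerAlgebra η) hφ hε
  obtain ⟨c, hψ, hc : 0 < c⟩ :=
    ((small.filter_mono nhdsWithin_le_nhds).and (self_mem_nhdsWithin (s := Ioi 0))).exists
  refine ⟨_, by simpa using hψ.const_smul (-1), ?_⟩
  filter_upwards [(isCompact_closedBall (0 : E) (2 / c)).compl_mem_cocompact] with y hy
  have η_eq_zero : η (c • y) = 0 := by
    apply η.zero_of_le_dist
    rw [mem_compl_iff, mem_closedBall_zero_iff, not_le, div_lt_iff₀' hc] at hy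
    simpa [norm_smul, abs_of_pos hc] using hy.le
  have η_zero : η 0 = 1 := η.one_of_mem_closedBall (by simp [η])
  simp [η_eq_zero, η_zero]

lemma exists_eqOn_one_mul_mem_wienerAlgebra {K : Set E} (hK : IsCompact K)
    (hloc : ∀ a ∈ K, ∃ ψ ∈ wienerAlgebra E, φ =ᶠ[𝓝 a] ψ) :
    ∃ η ∈ wienerAlgebra E, EqOn η 1 K ∧ η * φ ∈ wienerAlgebra E := by
  refine hK.induction_on (p := fun S ↦ ∃ η ∈ wienerAlgebra E, EqOn η 1 S ∧ η * φ ∈ wienerAlgebra E)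
    ⟨0, zero_mem _, eqOn_empty _ _, by simp⟩ ?mono ?union ?locally
  case mono =>
    exact fun S T hST ⟨η, hη, η_one, hηφ⟩ ↦ ⟨η, hη, η_one.mono hST, hηφ⟩
  case union =>
    rintro S T ⟨η, hη, η_one, hηφ⟩ ⟨θ, hθ, θ_one, hθφ⟩
    refine ⟨η + θ - η * θ, sub_mem (add_mem hη hθ) (mul_mem hη hθ), ?_, ?_⟩
    · rintro y (hy | hy)
      · simp [η_one hy]
      · simp [θ_one hy]
    · simpa only [sub_mul, add_mul, mul_assoc] using sub_mem (add_mem hηφ hθφ) (mul_mem hη hθφ)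
  case locally =>
    intro a ha
    obtain ⟨ψ, hψ, hφψ⟩ := hloc a ha
    obtain ⟨δ, hδ, eq_on_ball⟩ := Metric.eventually_nhds_iff_ball.1 hφψ
    let η : ContDiffBump a := ⟨δ / 2, δ, half_pos hδ, half_lt_self hδ⟩
    refine ⟨_, mem_nhdsWithin_of_mem_nhds (Metric.closedBall_mem_nhds a (half_pos hδ)),
      fun y ↦ η y, contDiffBump_mem_wienerAlgebra η, fun y hy ↦ ?_, ?_⟩
    · simp [η.one_of_mem_closedBall hy]
    · convert mul_mem (contDiffBump_mem_wienerAlgebra η) hψ using 1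
      ext y
      by_cases hy : y ∈ Metric.ball a δ
      · simp [eq_on_ball y hy]
      · simp [η.zero_of_le_dist (not_lt.1 hy)]

lemma mem_wienerAlgebra_of_locally (hloc : ∀ a, ∃ ψ ∈ wienerAlgebra E, φ =ᶠ[𝓝 a] ψ)
    (hinf : ∃ ψ ∈ wienerAlgebra E, φ =ᶠ[cocompact E] ψ) : φ ∈ wienerAlgebra E := by
  obtain ⟨ψ, hψ, hφψ⟩ := hinf
  obtain ⟨K, hK, eq_off_K⟩ := mem_cocompact.1 hφψ
  obtain ⟨η, hη, η_one, hηφ⟩ := exists_eqOn_one_mul_mem_wienerAlgebra hK fun a _ ↦ hloc a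
  convert add_mem hηφ (sub_mem hψ (mul_mem hη hψ)) using 1
  ext y
  by_cases hy : y ∈ K
  · simp [η_one hy]
  · simp [show φ y = ψ y from eq_off_K hy]

lemma exists_pos_forall_comp_sub_mem_wienerAlgebra {h : ℂ → ℂ} {z : ℂ} (hh : AnalyticAt ℂ h z) :
    ∃ ε > 0, ∀ ψ : E → ℂ, HasWienerNormLE ψ ε → (fun y ↦ h (z + ψ y) - h z) ∈ wienerAlgebra E := by
  obtain ⟨p, r, hp⟩ := hh
  obtain ⟨ε, hε, hεr⟩ := ENNReal.lt_iff_exists_nnreal_btwn.1 hp.r_pos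
  exact ⟨ε, by simpa using hε, fun ψ hψ ↦
    (hψ.comp_hasFPowerSeriesOnBall hp (by simpa using hεr)).mem_wienerAlgebra⟩

lemma exists_mem_wienerAlgebra_comp_eventuallyEq_nhds (hφ : φ ∈ wienerAlgebra E) {h : ℂ → ℂ}
    {a : E} (hh : AnalyticAt ℂ h (φ a)) : ∃ ψ ∈ wienerAlgebra E, h ∘ φ =ᶠ[𝓝 a] ψ := by
  obtain ⟨ε, hε, comp_mem⟩ := exists_pos_forall_comp_sub_mem_wienerAlgebra (E := E) hh
  obtain ⟨ψ, hψ, hφψ⟩ := exists_hasWienerNormLE_eventually_nhds_eq_add hφ a hε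
  let η : ContDiffBump a := ⟨1, 2, one_pos, one_lt_two⟩
  have const_near_a := SMulMemClass.smul_mem (h (φ a)) (contDiffBump_mem_wienerAlgebra η)
  refine ⟨_, add_mem (comp_mem ψ hψ) const_near_a, ?_⟩
  filter_upwards [hφψ, η.eventuallyEq_one] with y hy hηy
  simp [hy, hηy]

lemma exists_mem_wienerAlgebra_comp_eventuallyEq_cocompact (hφ : φ ∈ wienerAlgebra E) {h : ℂ → ℂ}
    (hh : AnalyticAt ℂ h 0) (h0 : h 0 = 0) :
    ∃ ψ ∈ wienerAlgebra E, h ∘ φ =ᶠ[cocompact E] ψ := by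
  obtain ⟨ε, hε, comp_mem⟩ := exists_pos_forall_comp_sub_mem_wienerAlgebra (E := E) hh
  obtain ⟨ψ, hψ, hφψ⟩ := exists_hasWienerNormLE_eventuallyEq_cocompact hφ hε
  refine ⟨_, comp_mem ψ hψ, ?_⟩
  filter_upwards [hφψ] with y hy
  simp [hy, h0]

end WienerAlgebra

theorem wiener_levi_L1_general {f : E → ℂ} (hf : Integrable f) {h : ℂ → ℂ}
    (hh : AnalyticOnNhd ℂ h (closure (range (𝓕 f)))) (h0 : h 0 = 0) :
    ∃ g : E → ℂ, Integrable g ∧ ∀ y : E, 𝓕 g y = h (𝓕 f y) := by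
  have hφ : 𝓕 f ∈ wienerAlgebra E := ⟨f, hf, rfl⟩
  suffices h ∘ 𝓕 f ∈ wienerAlgebra E by
    obtain ⟨g, hg, hgf⟩ := this
    exact ⟨g, hg, congrFun hgf⟩
  refine mem_wienerAlgebra_of_locally (fun a ↦ ?nhds) ?cocompact
  case nhds =>
    exact exists_mem_wienerAlgebra_comp_eventuallyEq_nhds hφ
      (hh _ (subset_closure (mem_range_self a)))
  case cocompact =>
    obtain cocompact_eq_bot | _ := (cocompact E).eq_or_neBot
    · exact ⟨0, zero_mem _, by simp [cocompact_eq_bot, EventuallyEq]⟩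
    · have zero_mem_closure : (0 : ℂ) ∈ closure (range (𝓕 f)) :=
        mem_closure_of_tendsto (tendsto_integral_exp_inner_smul_cocompact f)
          (.of_forall mem_range_self)
      exact exists_mem_wienerAlgebra_comp_eventuallyEq_cocompact hφ (hh 0 zero_mem_closure) h0

/-- **Wiener–Levi Theorem for `L¹(ℝ)`.** If `f ∈ L¹(ℝ)` and `h` is holomorphic on an open
neighborhood of the closure of the range of the Fourier transform `𝓕 f`, with `h 0 = 0`,
then there is `g ∈ L¹(ℝ)` whose Fourier transform is `h ∘ 𝓕 f`. -/
theorem wiener_levi_L1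
    (f : ℝ → ℂ) (hf : Integrable f)
    (h : ℂ → ℂ) (V : Set ℂ) (hV : IsOpen V)
    (hKV : closure (Set.range (𝓕 f)) ⊆ V)
    (hh : DifferentiableOn ℂ h V) (h0 : h 0 = 0) :
    ∃ g : ℝ → ℂ, Integrable g ∧ ∀ y : ℝ, 𝓕 g y = h (𝓕 f y) :=
  wiener_levi_L1_general hf ((hh.analyticOnNhd hV).mono hKV) h0
end
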